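/- For all functions f, g : V* → ℝ, each of finite energy (sup_{n≥0} 𝓔_n(f,f) < ∞ and sup_{n≥0} 𝓔_n(g,g) < ∞), the limit 𝓔(f,g) = lim_{n→∞} 𝓔_n(f,g) exists (as a finite real number), where 𝓔_n(f,g) = (5/3)^n Σ_{{x,y}∈E_n} (f(y)−f(x))(g(y)−g(x)). -/

import Mathlib

open Set MeasureTheory Filter Topology
open scoped Classical ENNReal NNReal BoundedContinuousFunction

noncomputable section

/-- The plane, with the Euclidean norm. -/
abbrev Pt : Type := EuclideanSpace ℝ (Fin 2)

/-- The three vertexes of the initial equilateral triangle. -/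
def ptA : Fin 3 → Pt
  | 0 => (WithLp.equiv 2 (Fin 2 → ℝ)).symm ![0, 0]
  | 1 => (WithLp.equiv 2 (Fin 2 → ℝ)).symm ![1, 0]
  | 2 => (WithLp.equiv 2 (Fin 2 → ℝ)).symm ![1 / 2, Real.sqrt 3 / 2]

/-- The contraction `fᵢ(z) = (z + aᵢ)/2`. -/
def sgMap (i : Fin 3) (z : Pt) : Pt := (2 : ℝ)⁻¹ • (z + ptA i)

/-- The vertex sets `V_n`. -/
def Vn : ℕ → Finset Pt
  | 0 => {ptA 0, ptA 1, ptA 2}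
  | n + 1 => (Vn n).image (sgMap 0) ∪ (Vn n).image (sgMap 1) ∪ (Vn n).image (sgMap 2)

/-- `V* = ⋃ₙ Vₙ`. -/
def Vstar : Set Pt := ⋃ n, (Vn n : Set Pt)

/-- The Sierpinski gasket `V`, the closure of `V*`. -/
def sg : Set Pt := closure Vstar

lemma Vstar_subset_sg {x : Pt} (hx : x ∈ Vstar) : x ∈ sg :=
  subset_closure hx

lemma Vn_subset_sg {n : ℕ} {x : Pt} (hx : x ∈ Vn n) : x ∈ sg :=
  subset_closure (Set.mem_iUnion.mpr ⟨n, hx⟩)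

/-- `{x,y}` is an edge of the graph `Γₙ`. -/
def isEdge (n : ℕ) (x y : Pt) : Prop := ‖x - y‖ = (2 : ℝ) ^ (-(n : ℤ))

/-- The discrete energy form `𝓔ₙ(u,v) = (5/3)ⁿ Σ_{{x,y}∈Eₙ} (u(y)-u(x))(v(y)-v(x))`;
the sum over unordered pairs is written as half the sum over ordered pairs. -/
def energyBi (n : ℕ) (u v : Pt → ℝ) : ℝ :=
  (5 / 3 : ℝ) ^ n * (1 / 2) *
    ∑ x ∈ Vn n, ∑ y ∈ Vn n, if isEdge n x y then (u y - u x) * (v y - v x) else 0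

/-- The discrete energy `𝓔ₙ(u,u)`. -/
def energy (n : ℕ) (u : Pt → ℝ) : ℝ := energyBi n u u

/-- The discrete Laplacian `Δₙ g(x) = 5ⁿ Σ_{y:{x,y}∈Eₙ} (g(y)-g(x))`. -/
def discLap (n : ℕ) (g : Pt → ℝ) (x : Pt) : ℝ :=
  (5 : ℝ) ^ n * ∑ y ∈ Vn n, if isEdge n x y then g y - g x else 0

/-- A function on `V*` has finite energy if `supₙ 𝓔ₙ(u,u) < ∞`. -/
def FiniteEnergy (u : Pt → ℝ) : Prop := BddAbove (Set.range fun n => energy n u)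

/-- The empirical vertex measure `μₙ`, giving mass `3⁻ⁿ` to each point of `Vₙ`. -/
def empMeas (n : ℕ) : Measure Pt :=
  ((3 : ℝ≥0∞) ^ n)⁻¹ • ∑ x ∈ Vn n, Measure.dirac x

/-- Extension by zero of a continuous function on the gasket. -/
def sgExt (f : C(sg, ℝ)) (x : Pt) : ℝ := if hx : x ∈ sg then f ⟨x, hx⟩ else 0

/-- `h(k)! = h(1)⋯h(k)`, with `h(0)! = 1`. -/
def hfact (h : ℕ → ℝ) (k : ℕ) : ℝ := ∏ i ∈ Finset.range k, h (i + 1)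

/-- The partition function `Z(φ) = Σₖ φᵏ/h(k)!`. -/
def Zfun (h : ℕ → ℝ) (φ : ℝ) : ℝ := ∑' k, φ ^ k / hfact h k

/-- The one-site marginal `p_φ(k) = Z(φ)⁻¹ φᵏ/h(k)!`. -/
def pmarg (h : ℕ → ℝ) (φ : ℝ) (k : ℕ) : ℝ := (Zfun h φ)⁻¹ * φ ^ k / hfact h k

/-- The mean of the one-site marginal `p_φ`. -/
def meanFun (h : ℕ → ℝ) (φ : ℝ) : ℝ := ∑' k : ℕ, (k : ℝ) * pmarg h φ k

/-- The zero-range generator on `Ωₙ = ℕ^{Vₙ}`, summing over ordered pairs `(x,y)`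
with `{x,y} ∈ Eₙ`. -/
def zrGen (n : ℕ) (h : ℕ → ℝ) (F : (↥(Vn n) → ℕ) → ℝ) (η : ↥(Vn n) → ℕ) : ℝ :=
  ∑ x : ↥(Vn n), ∑ y : ↥(Vn n),
    if isEdge n x.1 y.1 then
      h (η x) * (F (Function.update (Function.update η x (η x - 1)) y (η y + 1)) - F η)
    else 0

/-!
An edge of level `n` either lies inside a cell of level `n` or joins two cells which share a vertex.
For the energy of the edges of the first kind the factor `5/3` is exactly the renormalization which
makes harmonic extension energy preserving, and harmonic functions are orthogonal to the functions
vanishing at the boundary. Hence these cell energies increase with `n`, and the cell energy of the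
difference between a function and its harmonic spline of level `m` is the increment from level `m`
to level `n`, which for large `m` is small uniformly in `n`. The full energy is at most five times
the cell energy, so in the seminorms `√𝓔ₙ` a function of finite energy is approximated by its
harmonic splines, uniformly in `n`, and it suffices that the energies of splines converge. Inside a
harmonic piece they are increasing and bounded, and the edges joining two pieces contribute
`O((3/5)ⁿ)`. The bilinear case follows by polarization.
-/

namespace SierpinskiGasket

lemma cauchySeq_of_forall_exists_dist_le {X ι : Type*} [PseudoMetricSpace X] [Nonempty ι]
    [SemilatticeSup ι] {a : ι → X}
    (h : ∀ ε > 0, ∃ b : ι → X, CauchySeq b ∧ ∀ᶠ i in atTop, dist (a i) (b i) ≤ ε) :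
    CauchySeq a := by
  rw [Metric.cauchySeq_iff]
  intro ε hε
  obtain ⟨b, hb, hab⟩ := h (ε / 4) (by positivity)
  obtain ⟨N, hN⟩ := Metric.cauchySeq_iff.1 hb (ε / 4) (by positivity)
  obtain ⟨K, hK⟩ := eventually_atTop.1 hab
  refine ⟨N ⊔ K, fun i hi j hj => ?_⟩
  have hi' := hK i (le_sup_right.trans hi)
  have hj' := hK j (le_sup_right.trans hj)
  have hij := hN i (le_sup_left.trans hi) j (le_sup_left.trans hj)
  rw [dist_comm] at hj'
  linarith [dist_triangle4 (a i) (b i) (b j) (a j)]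

/-! ### Nonnegative quadratic forms -/

section QuadraticForm

variable {M : Type*} [AddCommGroup M] [Module ℝ M]

lemma polar_sq_le_four_mul {Q : QuadraticForm ℝ M} (hQ : ∀ x, 0 ≤ Q x) (x y : M) :
    QuadraticMap.polar Q x y ^ 2 ≤ 4 * (Q x * Q y) := by
  have hself (z : M) : Q.polarBilin z z = 2 * Q z := by
    rw [QuadraticMap.polarBilin_apply_apply, QuadraticMap.polar_self, two_nsmul, two_mul]
  have hsymm : Q.polarBilin.IsSymm := ⟨fun x y => QuadraticMap.polar_comm Q x y⟩
  have hcs := LinearMap.BilinForm.apply_sq_le_of_symm Q.polarBilin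
    (fun z => by rw [hself]; exact mul_nonneg zero_le_two (hQ z)) hsymm x y
  rw [hself, hself, QuadraticMap.polarBilin_apply_apply] at hcs
  linarith

lemma sqrt_map_add_le {Q : QuadraticForm ℝ M} (hQ : ∀ x, 0 ≤ Q x) (x y : M) :
    √(Q (x + y)) ≤ √(Q x) + √(Q y) := by
  have hpolar : QuadraticMap.polar Q x y ≤ 2 * (√(Q x) * √(Q y)) := by
    refine le_trans (le_abs_self _) (abs_le_of_sq_le_sq ?_ (by positivity))
    rw [mul_pow, mul_pow, Real.sq_sqrt (hQ x), Real.sq_sqrt (hQ y)]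
    linarith [polar_sq_le_four_mul hQ x y]
  rw [Real.sqrt_le_left (by positivity), QuadraticMap.map_add Q x y, add_sq, Real.sq_sqrt (hQ x),
    Real.sq_sqrt (hQ y)]
  linarith

lemma abs_sqrt_map_sub_sqrt_map_le {Q : QuadraticForm ℝ M} (hQ : ∀ x, 0 ≤ Q x) (x y : M) :
    |√(Q x) - √(Q y)| ≤ √(Q (x - y)) := by
  have hx := sqrt_map_add_le hQ (x - y) y
  have hy := sqrt_map_add_le hQ (y - x) x
  rw [sub_add_cancel] at hx hy
  rw [Q.map_sub y x] at hy
  rw [abs_le]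
  constructor <;> linarith

lemma map_add_le_two_mul {Q : QuadraticForm ℝ M} (hQ : ∀ x, 0 ≤ Q x) (x y : M) :
    Q (x + y) ≤ 2 * (Q x + Q y) := by
  have hparallelogram : Q (x + y) + Q (x - y) = 2 * (Q x + Q y) := by
    rw [sub_eq_add_neg, QuadraticMap.map_add Q x y, QuadraticMap.map_add Q x (-y),
      QuadraticMap.polar_neg_right, Q.map_neg]
    ring
  linarith [hQ (x - y)]

lemma bddAbove_range_map_add {ι : Type*} {Q : ι → QuadraticForm ℝ M} (hQ : ∀ i x, 0 ≤ Q i x)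
    {x y : M} (hx : BddAbove (range fun i => Q i x)) (hy : BddAbove (range fun i => Q i y)) :
    BddAbove (range fun i => Q i (x + y)) := by
  obtain ⟨a, ha⟩ := hx
  obtain ⟨b, hb⟩ := hy
  refine ⟨2 * (a + b), forall_mem_range.2 fun i => (map_add_le_two_mul (hQ i) x y).trans ?_⟩
  linarith [ha (mem_range_self i), hb (mem_range_self i)]

/-- By the triangle inequality for `√Q`, a vector has convergent energies as soon as it is
approximated, in the seminorms `√(Q i)` with `i` large, by vectors with convergent energies. -/
lemma exists_tendsto_map_of_approx {ι : Type*} [Nonempty ι] [SemilatticeSup ι]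
    {Q : ι → QuadraticForm ℝ M} (hQ : ∀ i x, 0 ≤ Q i x) {x : M}
    (h : ∀ ε > 0, ∃ y, (∃ L, Tendsto (fun i => Q i y) atTop (𝓝 L)) ∧
      ∀ᶠ i in atTop, Q i (x - y) ≤ ε) :
    ∃ L, Tendsto (fun i => Q i x) atTop (𝓝 L) := by
  have hcauchy : CauchySeq fun i => √(Q i x) := by
    refine cauchySeq_of_forall_exists_dist_le fun ε hε => ?_
    obtain ⟨y, ⟨L, hL⟩, hy⟩ := h (ε ^ 2) (by positivity)
    refine ⟨fun i => √(Q i y), hL.sqrt.cauchySeq, hy.mono fun i hi => ?_⟩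
    exact (abs_sqrt_map_sub_sqrt_map_le (hQ i) x y).trans (Real.sqrt_le_iff.2 ⟨hε.le, hi⟩)
  obtain ⟨L, hL⟩ := cauchySeq_tendsto_of_complete hcauchy
  exact ⟨L ^ 2, (hL.pow 2).congr fun i => Real.sq_sqrt (hQ i x)⟩

end QuadraticForm

/-! ### Sums over three indices -/

lemma fin_three_add_one_ne (k : Fin 3) : k + 1 ≠ k := by simp

lemma fin_three_add_two_ne (k : Fin 3) : k + 2 ≠ k := by simp

lemma fin_three_add_one_ne_add_two (k : Fin 3) : k + 1 ≠ k + 2 := by simp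

lemma fin_three_eq_or_eq_or_eq {i j k : Fin 3} (hij : i ≠ j) (hik : i ≠ k) (hjk : j ≠ k)
    (l : Fin 3) : l = i ∨ l = j ∨ l = k := by
  revert i j k l
  decide

lemma sum_univ_fin_three {M : Type*} [AddCommMonoid M] {i j k : Fin 3} (hij : i ≠ j) (hik : i ≠ k)
    (hjk : j ≠ k) (c : Fin 3 → M) : ∑ l, c l = c i + c j + c k := by
  have huniv : (Finset.univ : Finset (Fin 3)) = {i, j, k} := by
    revert i j k
    decide
  rw [huniv, Finset.sum_insert (by simp [hij, hik]), Finset.sum_pair hjk, add_assoc]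

lemma sum_sum_fin_three {M : Type*} [AddCommMonoid M] (φ : Fin 3 → Fin 3 → M) :
    ∑ i, ∑ j, φ i j =
      ∑ j, φ j j + ∑ k : Fin 3, (φ (k + 1) (k + 2) + φ (k + 2) (k + 1)) := by
  simp only [Fin.sum_univ_three, zero_add, Fin.reduceAdd]
  abel

/-! ### Energies of functions of an address and a corner -/

/-- A real-valued function on the corners of the cells of the gasket: `U w j` is the value at the
corner `j` of the cell with address `w`, the first letter of `w` being the outermost one. Corners
of different cells may be the same point; see `junctionCompatible`. -/
abbrev CellFun : Type := List (Fin 3) → Fin 3 → ℝ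

/-- Restriction of a function to the cell `i`, which is itself a copy of the gasket. -/
def subcell (i : Fin 3) : CellFun →ₗ[ℝ] CellFun :=
  LinearMap.funLeft ℝ (Fin 3 → ℝ) (List.cons i)

lemma subcell_apply (i : Fin 3) (U : CellFun) (w : List (Fin 3)) : subcell i U w = U (i :: w) :=
  rfl

/-- The Dirichlet energy of a function on the vertices of a triangle. The term `k` is the
contribution of the edge opposite to `k`. -/
def triangleForm : QuadraticForm ℝ (Fin 3 → ℝ) :=
  ∑ k : Fin 3, QuadraticMap.sq.comp
    ((LinearMap.proj (k + 1) : (Fin 3 → ℝ) →ₗ[ℝ] ℝ) - LinearMap.proj (k + 2))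

lemma triangleForm_apply (b : Fin 3 → ℝ) :
    triangleForm b = ∑ k : Fin 3, (b (k + 1) - b (k + 2)) ^ 2 := by
  simp [triangleForm, sq]

/-- The renormalized energy at level `n`, retaining only the edges inside the cells of level `n`. -/
def cellEnergy : ℕ → QuadraticForm ℝ CellFun
  | 0 => triangleForm.comp (LinearMap.proj [])
  | n + 1 => (5 / 3 : ℝ) • ∑ i : Fin 3, (cellEnergy n).comp (subcell i)

lemma cellEnergy_zero_apply (U : CellFun) : cellEnergy 0 U = triangleForm (U []) := rfl

lemma cellEnergy_succ_apply (n : ℕ) (U : CellFun) :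
    cellEnergy (n + 1) U = 5 / 3 * ∑ i, cellEnergy n (subcell i U) := by
  simp [cellEnergy]

/-- Evaluation at the corner `j` of the cell with address `w`. -/
def cornerEval (w : List (Fin 3)) (j : Fin 3) : CellFun →ₗ[ℝ] ℝ :=
  LinearMap.proj j ∘ₗ LinearMap.proj w

/-- The renormalized energy, at level `n + 1`, of the edges joining two different cells of level
one. The cells `k + 1` and `k + 2` share a point, and for each `k` there is one such edge, between
the two neighbours of this point in the direction of the corner `k`. At level one these neighbours
are the midpoints on the sides at the corner `k`, so that the edge lies in the cell `k` and does not
count. -/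
def contactForm (n : ℕ) : QuadraticForm ℝ CellFun :=
  if n = 0 then 0 else (5 / 3 : ℝ) ^ (n + 1) • ∑ k : Fin 3, QuadraticMap.sq.comp
    (cornerEval ((k + 1) :: List.replicate n (k + 2)) k -
      cornerEval ((k + 2) :: List.replicate n (k + 1)) k)

lemma contactForm_zero : contactForm 0 = 0 := if_pos rfl

lemma contactForm_apply {n : ℕ} (hn : n ≠ 0) (U : CellFun) :
    contactForm n U = (5 / 3) ^ (n + 1) * ∑ k : Fin 3,
      (U ((k + 1) :: List.replicate n (k + 2)) k -
        U ((k + 2) :: List.replicate n (k + 1)) k) ^ 2 := by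
  simp [contactForm, cornerEval, hn, sq]

/-- The renormalized energy at level `n` of all edges, those inside the cells of level `n` and
those joining neighbouring cells. -/
def graphEnergy : ℕ → QuadraticForm ℝ CellFun
  | 0 => triangleForm.comp (LinearMap.proj [])
  | n + 1 => (5 / 3 : ℝ) • ∑ i : Fin 3, (graphEnergy n).comp (subcell i) + contactForm n

lemma graphEnergy_zero_apply (U : CellFun) : graphEnergy 0 U = triangleForm (U []) := rfl

lemma graphEnergy_succ_apply (n : ℕ) (U : CellFun) :
    graphEnergy (n + 1) U = 5 / 3 * ∑ i, graphEnergy n (subcell i U) + contactForm n U := by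
  simp [graphEnergy]

lemma triangleForm_nonneg (b : Fin 3 → ℝ) : 0 ≤ triangleForm b := by
  rw [triangleForm_apply]
  positivity

lemma cellEnergy_nonneg (n : ℕ) (U : CellFun) : 0 ≤ cellEnergy n U := by
  induction n generalizing U with
  | zero => exact triangleForm_nonneg _
  | succ n ih =>
    rw [cellEnergy_succ_apply]
    exact mul_nonneg (by norm_num) (Finset.sum_nonneg fun i _ => ih _)

lemma contactForm_nonneg (n : ℕ) (U : CellFun) : 0 ≤ contactForm n U := by
  rcases eq_or_ne n 0 with rfl | hn
  · simp [contactForm_zero]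
  · rw [contactForm_apply hn]
    positivity

lemma cellEnergy_le_graphEnergy (n : ℕ) (U : CellFun) : cellEnergy n U ≤ graphEnergy n U := by
  induction n generalizing U with
  | zero => rfl
  | succ n ih =>
    rw [cellEnergy_succ_apply, graphEnergy_succ_apply]
    have hsum := Finset.sum_le_sum fun i (_ : i ∈ Finset.univ) => ih (subcell i U)
    linarith [contactForm_nonneg n U]

lemma graphEnergy_nonneg (n : ℕ) (U : CellFun) : 0 ≤ graphEnergy n U :=
  (cellEnergy_nonneg n U).trans (cellEnergy_le_graphEnergy n U)

/-- The functions which take a single value at each point of the gasket: a corner of a cell is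
also a corner of one of its subcells, and any two subcells of a cell meet at a common corner. -/
def junctionCompatible : Submodule ℝ CellFun where
  carrier := {U | (∀ w i, U (w ++ [i]) i = U w i) ∧ ∀ w i j, U (w ++ [i]) j = U (w ++ [j]) i}
  zero_mem' := ⟨fun _ _ => rfl, fun _ _ _ => rfl⟩
  add_mem' hU hV :=
    ⟨fun w i => congrArg₂ (· + ·) (hU.1 w i) (hV.1 w i),
      fun w i j => congrArg₂ (· + ·) (hU.2 w i j) (hV.2 w i j)⟩
  smul_mem' c _ hU :=
    ⟨fun w i => congrArg (c * ·) (hU.1 w i), fun w i j => congrArg (c * ·) (hU.2 w i j)⟩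

section Compatible

variable {U : CellFun}

lemma subcell_mem_junctionCompatible (hU : U ∈ junctionCompatible) (i : Fin 3) :
    subcell i U ∈ junctionCompatible :=
  ⟨fun w => hU.1 (i :: w), fun w => hU.2 (i :: w)⟩

lemma mem_junctionCompatible_of_subcell (hU : ∀ i, subcell i U ∈ junctionCompatible)
    (hcorner : ∀ i, U [i] i = U [] i) (hjunction : ∀ i j, U [i] j = U [j] i) :
    U ∈ junctionCompatible := by
  constructor
  · rintro (_ | ⟨a, w⟩) i
    exacts [hcorner i, (hU a).1 w i]
  · rintro (_ | ⟨a, w⟩) i j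
    exacts [hjunction i j, (hU a).2 w i j]

lemma apply_replicate_self (hU : U ∈ junctionCompatible) (n : ℕ) (j : Fin 3) :
    U (List.replicate n j) j = U [] j := by
  induction n with
  | zero => rfl
  | succ n ih => rw [List.replicate_succ', hU.1, ih]

lemma apply_cons_replicate_comm (hU : U ∈ junctionCompatible) (n : ℕ) (i j : Fin 3) :
    U (i :: List.replicate n j) j = U (j :: List.replicate n i) i := by
  have hi := apply_replicate_self (subcell_mem_junctionCompatible hU i) n j
  have hj := apply_replicate_self (subcell_mem_junctionCompatible hU j) n i
  simp only [subcell_apply] at hi hj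
  rw [hi, hj]
  exact hU.2 [] i j

end Compatible

/-! ### Harmonic functions and splines -/

/-- The values at the corners of the cell `i` of the harmonic function with boundary values `b`:
the midpoint of the corners `i` and `j` receives the weights `2/5, 2/5, 1/5`. -/
def harmonicStep (i : Fin 3) (b : Fin 3 → ℝ) (j : Fin 3) : ℝ :=
  if j = i then b i else (∑ k, b k + b i + b j) / 5

/-- The harmonic function on the gasket with boundary values `b`. -/
def harmonicExt (b : Fin 3 → ℝ) : CellFun
  | [] => b
  | i :: w => harmonicExt (harmonicStep i b) w

lemma subcell_harmonicExt (i : Fin 3) (b : Fin 3 → ℝ) :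
    subcell i (harmonicExt b) = harmonicExt (harmonicStep i b) := rfl

lemma harmonicStep_self (i : Fin 3) (b : Fin 3 → ℝ) : harmonicStep i b i = b i := if_pos rfl

lemma harmonicStep_comm (i j : Fin 3) (b : Fin 3 → ℝ) :
    harmonicStep i b j = harmonicStep j b i := by
  rcases eq_or_ne i j with rfl | hij
  · rfl
  · simp only [harmonicStep, hij, hij.symm, if_false]
    ring

lemma harmonicExt_mem_junctionCompatible (b : Fin 3 → ℝ) :
    harmonicExt b ∈ junctionCompatible := by
  constructor
  · intro w i
    induction w generalizing b with
    | nil => exact harmonicStep_self i b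
    | cons _ _ ih => exact ih _
  · intro w i j
    induction w generalizing b with
    | nil => exact harmonicStep_comm i j b
    | cons _ _ ih => exact ih _

lemma polar_triangleForm (b c : Fin 3 → ℝ) :
    QuadraticMap.polar triangleForm b c =
      2 * ∑ k : Fin 3, (b (k + 1) - b (k + 2)) * (c (k + 1) - c (k + 2)) := by
  simp only [QuadraticMap.polar, triangleForm_apply, Finset.mul_sum, ← Finset.sum_sub_distrib,
    Pi.add_apply]
  exact Finset.sum_congr rfl fun k _ => by ring

lemma polar_cellEnergy_succ (n : ℕ) (U V : CellFun) :
    QuadraticMap.polar (cellEnergy (n + 1)) U V =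
      5 / 3 * ∑ i, QuadraticMap.polar (cellEnergy n) (subcell i U) (subcell i V) := by
  simp only [QuadraticMap.polar, cellEnergy_succ_apply, map_add, Finset.sum_sub_distrib]
  ring

/-- Summation by parts at the midpoints, where the Laplacian of the harmonic function vanishes. -/
lemma sum_polar_harmonicStep {U : CellFun} (hU : U ∈ junctionCompatible) (b : Fin 3 → ℝ) :
    5 / 3 * ∑ i, QuadraticMap.polar triangleForm (U [i]) (harmonicStep i b) =
      QuadraticMap.polar triangleForm (U []) b := by
  have h0 : U [0] 0 = U [] 0 := hU.1 [] 0
  have h1 : U [1] 1 = U [] 1 := hU.1 [] 1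
  have h2 : U [2] 2 = U [] 2 := hU.1 [] 2
  have h01 : U [0] 1 = U [1] 0 := hU.2 [] 0 1
  have h02 : U [0] 2 = U [2] 0 := hU.2 [] 0 2
  have h12 : U [1] 2 = U [2] 1 := hU.2 [] 1 2
  simp only [polar_triangleForm, harmonicStep, Fin.sum_univ_three, zero_add, Fin.reduceAdd,
    Fin.reduceEq, one_ne_zero, zero_ne_one, if_true, if_false, h0, h1, h2, h01, h02, h12]
  ring

lemma polar_cellEnergy_harmonicExt {U : CellFun} (hU : U ∈ junctionCompatible) (n : ℕ)
    (b : Fin 3 → ℝ) :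
    QuadraticMap.polar (cellEnergy n) U (harmonicExt b) =
      QuadraticMap.polar triangleForm (U []) b := by
  induction n generalizing U b with
  | zero => rfl
  | succ n ih =>
    rw [polar_cellEnergy_succ, ← sum_polar_harmonicStep hU]
    simp only [subcell_harmonicExt, ih (subcell_mem_junctionCompatible hU _), subcell_apply]

lemma cellEnergy_harmonicExt (n : ℕ) (b : Fin 3 → ℝ) :
    cellEnergy n (harmonicExt b) = triangleForm b := by
  have hpolar := polar_cellEnergy_harmonicExt (harmonicExt_mem_junctionCompatible b) n b
  rw [QuadraticMap.polar_self, harmonicExt, QuadraticMap.polar_self] at hpolar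
  simpa using hpolar

lemma cellEnergy_sub_harmonicExt {U : CellFun} (hU : U ∈ junctionCompatible) (n : ℕ) :
    cellEnergy n (U - harmonicExt (U [])) = cellEnergy n U - triangleForm (U []) := by
  rw [sub_eq_add_neg, QuadraticMap.map_add (cellEnergy n) U, QuadraticMap.polar_neg_right,
    QuadraticMap.map_neg, polar_cellEnergy_harmonicExt hU, QuadraticMap.polar_self,
    cellEnergy_harmonicExt, nsmul_eq_mul]
  ring

/-- The harmonic spline of level `m` interpolating `U`: it agrees with `U` at the corners of the
cells of level at most `m` and is harmonic inside the cells of level `m`. -/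
def spline : ℕ → CellFun → CellFun
  | 0, U, w => harmonicExt (U []) w
  | _ + 1, U, [] => U []
  | m + 1, U, i :: w => spline m (subcell i U) w

lemma spline_nil (m : ℕ) (U : CellFun) : spline m U [] = U [] := by
  cases m <;> rfl

lemma subcell_spline_succ (i : Fin 3) (m : ℕ) (U : CellFun) :
    subcell i (spline (m + 1) U) = spline m (subcell i U) := rfl

lemma spline_mem_junctionCompatible {U : CellFun} (hU : U ∈ junctionCompatible) (m : ℕ) :
    spline m U ∈ junctionCompatible := by
  induction m generalizing U with
  | zero => exact harmonicExt_mem_junctionCompatible _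
  | succ m ih =>
    have hnil (i : Fin 3) : spline (m + 1) U [i] = U [i] := spline_nil m (subcell i U)
    refine mem_junctionCompatible_of_subcell
      (fun i => ih (subcell_mem_junctionCompatible hU i)) (fun i => ?_) fun i j => ?_
    · rw [hnil, spline_nil]
      exact hU.1 [] i
    · rw [hnil, hnil]
      exact hU.2 [] i j

lemma cellEnergy_sub_spline {U : CellFun} (hU : U ∈ junctionCompatible) (k m : ℕ) :
    cellEnergy (k + m) (U - spline m U) = cellEnergy (k + m) U - cellEnergy m U := by
  induction m generalizing U with
  | zero => exact cellEnergy_sub_harmonicExt hU k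
  | succ m ih =>
    rw [← add_assoc]
    simp only [cellEnergy_succ_apply, map_sub, subcell_spline_succ,
      ih (subcell_mem_junctionCompatible hU _), Finset.sum_sub_distrib]
    ring

/-! ### Contact edges -/

/-- The sum of the squared differences between the corner `j` of a triangle and its corners. -/
def cornerStar (j : Fin 3) (b : Fin 3 → ℝ) : ℝ := ∑ k, (b k - b j) ^ 2

/-- The renormalized energy at level `n` of the two edges which start at the outer corner `j`. -/
def cornerEnergy (n : ℕ) (j : Fin 3) (U : CellFun) : ℝ :=
  (5 / 3) ^ n * cornerStar j (U (List.replicate n j))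

lemma cornerEnergy_nonneg (n : ℕ) (j : Fin 3) (U : CellFun) : 0 ≤ cornerEnergy n j U :=
  mul_nonneg (by positivity) (Finset.sum_nonneg fun _ _ => sq_nonneg _)

lemma cornerEnergy_succ (n : ℕ) (j : Fin 3) (U : CellFun) :
    cornerEnergy (n + 1) j U = 5 / 3 * cornerEnergy n j (subcell j U) := by
  rw [cornerEnergy, cornerEnergy, pow_succ', mul_assoc, List.replicate_succ, subcell_apply]

lemma sum_cornerStar (b : Fin 3 → ℝ) : ∑ j, cornerStar j b = 2 * triangleForm b := by
  simp only [cornerStar, triangleForm_apply, Fin.sum_univ_three, zero_add, Fin.reduceAdd]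
  ring

lemma contactForm_le {U : CellFun} (hU : U ∈ junctionCompatible) (n : ℕ) :
    contactForm n U ≤ 10 / 3 * ∑ k : Fin 3, (cornerEnergy n (k + 2) (subcell (k + 1) U) +
      cornerEnergy n (k + 1) (subcell (k + 2) U)) := by
  rcases eq_or_ne n 0 with rfl | hn
  · rw [contactForm_zero, zero_apply]
    exact mul_nonneg (by norm_num) (Finset.sum_nonneg fun k _ =>
      add_nonneg (cornerEnergy_nonneg _ _ _) (cornerEnergy_nonneg _ _ _))
  rw [contactForm_apply hn, pow_succ, mul_assoc, Finset.mul_sum, Finset.mul_sum, Finset.mul_sum]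
  refine Finset.sum_le_sum fun k _ => ?_
  have hstar (j l : Fin 3) (b : Fin 3 → ℝ) : (b l - b j) ^ 2 ≤ cornerStar j b :=
    Finset.single_le_sum (f := fun l => (b l - b j) ^ 2) (fun _ _ => sq_nonneg _)
      (Finset.mem_univ l)
  have hp := hstar (k + 2) k (U ((k + 1) :: List.replicate n (k + 2)))
  have hq := hstar (k + 1) k (U ((k + 2) :: List.replicate n (k + 1)))
  rw [apply_cons_replicate_comm hU] at hp
  simp only [cornerEnergy, subcell_apply, ← mul_add]
  set p := U ((k + 1) :: List.replicate n (k + 2)) k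
  set q := U ((k + 2) :: List.replicate n (k + 1)) k
  set c := U ((k + 2) :: List.replicate n (k + 1)) (k + 1)
  have hpq : (p - q) ^ 2 ≤ 2 * ((p - c) ^ 2 + (q - c) ^ 2) := by
    linarith [sq_nonneg (p - c + (q - c))]
  calc (5 / 3) ^ n * (5 / 3 * (p - q) ^ 2)
      ≤ (5 / 3) ^ n * (5 / 3 * (2 * (cornerStar (k + 2) (U ((k + 1) :: List.replicate n (k + 2))) +
          cornerStar (k + 1) (U ((k + 2) :: List.replicate n (k + 1)))))) := by
        gcongr
        linarith
    _ = _ := by ring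

/-- The corner energies strengthen the induction: each of them pays for half of the contact edge
created when its corner becomes a junction, which is why the factor `2` reproduces itself. -/
lemma graphEnergy_add_cornerEnergy_le {U : CellFun} (hU : U ∈ junctionCompatible) (n : ℕ) :
    graphEnergy n U + 2 * ∑ j, cornerEnergy n j U ≤ 5 * cellEnergy n U := by
  induction n generalizing U with
  | zero =>
    have hcorner : ∑ j, cornerEnergy 0 j U = 2 * triangleForm (U []) := by
      simp [cornerEnergy, ← sum_cornerStar]
    rw [hcorner, graphEnergy_zero_apply, cellEnergy_zero_apply]
    linarith
  | succ n ih =>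
    have hcells := Finset.sum_le_sum fun i (_ : i ∈ Finset.univ) =>
      ih (subcell_mem_junctionCompatible hU i)
    rw [Finset.sum_add_distrib, ← Finset.mul_sum, ← Finset.mul_sum, sum_sum_fin_three] at hcells
    rw [graphEnergy_succ_apply, cellEnergy_succ_apply]
    simp only [cornerEnergy_succ, ← Finset.mul_sum]
    linarith [contactForm_le hU n]

lemma graphEnergy_le {U : CellFun} (hU : U ∈ junctionCompatible) (n : ℕ) :
    graphEnergy n U ≤ 5 * cellEnergy n U := by
  have hcorner : 0 ≤ ∑ j, cornerEnergy n j U :=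
    Finset.sum_nonneg fun j _ => cornerEnergy_nonneg n j U
  linarith [graphEnergy_add_cornerEnergy_le hU n]

/-! ### Convergence of the energies of splines -/

lemma harmonicExt_replicate (n : ℕ) (b : Fin 3 → ℝ) {j k l : Fin 3} (hjk : j ≠ k) (hjl : j ≠ l)
    (hkl : k ≠ l) :
    harmonicExt b (List.replicate n j) k =
      b j + (3 / 5) ^ n * ((b k + b l) / 2 - b j) + (1 / 5) ^ n * ((b k - b l) / 2) := by
  induction n generalizing b with
  | zero =>
    simp only [List.replicate_zero, harmonicExt, pow_zero]
    ring
  | succ n ih =>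
    rw [List.replicate_succ, harmonicExt, ih]
    simp only [harmonicStep, hjk.symm, hjl.symm, if_true, if_false, sum_univ_fin_three hjk hjl hkl]
    ring

lemma contactForm_harmonicExt {n : ℕ} (hn : n ≠ 0) (b : Fin 3 → ℝ) :
    contactForm n (harmonicExt b) =
      (5 / 3) ^ (n + 1) * ((3 / 5) ^ (n + 1) - 2 * (1 / 5) ^ (n + 1)) ^ 2 * triangleForm b := by
  rw [contactForm_apply hn, triangleForm_apply, mul_assoc, Finset.mul_sum (a := (_ - _) ^ 2)]
  congr 1
  refine Finset.sum_congr rfl fun k _ => ?_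
  have hk1 := fin_three_add_one_ne k
  have hk2 := fin_three_add_two_ne k
  have h12 := fin_three_add_one_ne_add_two k
  simp only [harmonicExt]
  rw [harmonicExt_replicate n _ hk2 h12.symm hk1.symm, harmonicExt_replicate n _ hk1 h12 hk2.symm]
  simp only [harmonicStep, hk1.symm, hk2.symm, h12, h12.symm, if_true, if_false]
  ring

lemma sum_triangleForm_harmonicStep (b : Fin 3 → ℝ) :
    5 / 3 * ∑ i, triangleForm (harmonicStep i b) = triangleForm b := by
  simpa only [cellEnergy_succ_apply, cellEnergy_zero_apply, subcell_apply, harmonicExt] using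
    cellEnergy_harmonicExt 1 b

lemma sum_contactForm_harmonicStep (n : ℕ) (b : Fin 3 → ℝ) :
    5 / 3 * ∑ i, contactForm n (harmonicExt (harmonicStep i b)) =
      contactForm n (harmonicExt b) := by
  rcases eq_or_ne n 0 with rfl | hn
  · simp [contactForm_zero]
  · simp only [contactForm_harmonicExt hn, ← Finset.mul_sum]
    rw [mul_left_comm, sum_triangleForm_harmonicStep]

lemma graphEnergy_harmonicExt (n : ℕ) (b : Fin 3 → ℝ) :
    graphEnergy n (harmonicExt b) =
      triangleForm b + ∑ m ∈ Finset.range n, contactForm m (harmonicExt b) := by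
  induction n generalizing b with
  | zero => simp [graphEnergy_zero_apply, harmonicExt]
  | succ n ih =>
    simp only [graphEnergy_succ_apply, subcell_harmonicExt, ih]
    rw [Finset.sum_add_distrib, mul_add, sum_triangleForm_harmonicStep, Finset.sum_comm,
      Finset.mul_sum, Finset.sum_range_succ, add_assoc]
    simp only [sum_contactForm_harmonicStep]

lemma exists_tendsto_graphEnergy_harmonicExt (b : Fin 3 → ℝ) :
    ∃ L, Tendsto (fun n => graphEnergy n (harmonicExt b)) atTop (𝓝 L) := by
  refine ⟨_, tendsto_atTop_ciSup (monotone_nat_of_le_succ fun n => ?_)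
    ⟨5 * triangleForm b, forall_mem_range.2 fun n => ?_⟩⟩
  · rw [graphEnergy_harmonicExt, graphEnergy_harmonicExt, Finset.sum_range_succ]
    linarith [contactForm_nonneg n (harmonicExt b)]
  · rw [← cellEnergy_harmonicExt n b]
    exact graphEnergy_le (harmonicExt_mem_junctionCompatible b) n

lemma cornerStar_harmonicStep_le (j : Fin 3) (b : Fin 3 → ℝ) :
    cornerStar j (harmonicStep j b) ≤ 9 / 25 * cornerStar j b := by
  fin_cases j <;> simp [cornerStar, harmonicStep, Fin.sum_univ_three] <;>
    linarith [sq_nonneg (b 0 - b 1), sq_nonneg (b 1 - b 2), sq_nonneg (b 2 - b 0)]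

lemma cornerEnergy_harmonicExt_le (n : ℕ) (j : Fin 3) (b : Fin 3 → ℝ) :
    cornerEnergy n j (harmonicExt b) ≤ (3 / 5) ^ n * cornerStar j b := by
  induction n generalizing b with
  | zero => simp [cornerEnergy, harmonicExt]
  | succ n ih =>
    rw [cornerEnergy_succ, subcell_harmonicExt]
    calc 5 / 3 * cornerEnergy n j (harmonicExt (harmonicStep j b))
        ≤ 5 / 3 * ((3 / 5) ^ n * (9 / 25 * cornerStar j b)) := by
          gcongr
          exact (ih _).trans (by gcongr; exact cornerStar_harmonicStep_le j b)
      _ = (3 / 5) ^ (n + 1) * cornerStar j b := by ring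

lemma tendsto_cornerEnergy_spline (m : ℕ) (j : Fin 3) (U : CellFun) :
    Tendsto (fun n => cornerEnergy n j (spline m U)) atTop (𝓝 0) := by
  induction m generalizing U with
  | zero =>
    refine squeeze_zero (fun n => cornerEnergy_nonneg _ _ _)
      (fun n => cornerEnergy_harmonicExt_le n j (U [])) ?_
    simpa using (tendsto_pow_atTop_nhds_zero_of_lt_one (r := (3 / 5 : ℝ)) (by norm_num)
      (by norm_num)).mul_const (cornerStar j (U []))
  | succ m ih =>
    rw [← tendsto_add_atTop_iff_nat 1]
    simpa only [cornerEnergy_succ, subcell_spline_succ, mul_zero] using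
      (ih (subcell j U)).const_mul (5 / 3)

lemma tendsto_contactForm_spline_succ {U : CellFun} (hU : U ∈ junctionCompatible) (m : ℕ) :
    Tendsto (fun n => contactForm n (spline (m + 1) U)) atTop (𝓝 0) := by
  refine squeeze_zero (fun n => contactForm_nonneg _ _)
    (fun n => contactForm_le (spline_mem_junctionCompatible hU (m + 1)) n) ?_
  simp only [subcell_spline_succ]
  simpa using (tendsto_finsetSum Finset.univ fun (k : Fin 3) _ =>
    (tendsto_cornerEnergy_spline m (k + 2) (subcell (k + 1) U)).add
      (tendsto_cornerEnergy_spline m (k + 1) (subcell (k + 2) U))).const_mul (10 / 3)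

lemma exists_tendsto_graphEnergy_spline {U : CellFun} (hU : U ∈ junctionCompatible) (m : ℕ) :
    ∃ L, Tendsto (fun n => graphEnergy n (spline m U)) atTop (𝓝 L) := by
  induction m generalizing U with
  | zero => exact exists_tendsto_graphEnergy_harmonicExt _
  | succ m ih =>
    choose L hL using fun i => ih (subcell_mem_junctionCompatible hU i)
    refine ⟨5 / 3 * ∑ i, L i + 0, (tendsto_add_atTop_iff_nat 1).1 ?_⟩
    simp only [graphEnergy_succ_apply, subcell_spline_succ]
    exact ((tendsto_finsetSum _ fun i _ => hL i).const_mul _).add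
      (tendsto_contactForm_spline_succ hU m)

lemma exists_tendsto_graphEnergy {U : CellFun} (hU : U ∈ junctionCompatible)
    (hbdd : BddAbove (range fun n => graphEnergy n U)) :
    ∃ L, Tendsto (fun n => graphEnergy n U) atTop (𝓝 L) := by
  have hcell : BddAbove (range fun n => cellEnergy n U) :=
    hbdd.range_mono _ fun n => cellEnergy_le_graphEnergy n U
  refine exists_tendsto_map_of_approx graphEnergy_nonneg fun ε hε => ?_
  obtain ⟨m, hm⟩ : ∃ m, ∀ n, cellEnergy n U - cellEnergy m U ≤ ε / 5 := by
    obtain ⟨m, hm⟩ := exists_lt_of_lt_ciSup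
      (sub_lt_self (⨆ n, cellEnergy n U) (div_pos hε (by norm_num : (0 : ℝ) < 5)))
    exact ⟨m, fun n => by linarith [le_ciSup hcell n]⟩
  refine ⟨spline m U, exists_tendsto_graphEnergy_spline hU m, eventually_atTop.2 ⟨m, ?_⟩⟩
  intro n hmn
  obtain ⟨k, rfl⟩ := Nat.exists_eq_add_of_le' hmn
  calc graphEnergy (k + m) (U - spline m U)
      ≤ 5 * cellEnergy (k + m) (U - spline m U) :=
        graphEnergy_le (sub_mem hU (spline_mem_junctionCompatible hU m)) _
    _ = 5 * (cellEnergy (k + m) U - cellEnergy m U) := by rw [cellEnergy_sub_spline hU]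
    _ ≤ ε := by linarith [hm (k + m)]

/-! ### Barycentric coordinates -/

lemma sgMap_ptA_self (i : Fin 3) : sgMap i (ptA i) = ptA i := by
  rw [sgMap, ← two_smul ℝ (ptA i), inv_smul_smul₀ two_ne_zero]

lemma sgMap_ptA_comm (i j : Fin 3) : sgMap i (ptA j) = sgMap j (ptA i) := by
  rw [sgMap, sgMap, add_comm]

lemma sgMap_sub_sgMap (i : Fin 3) (x y : Pt) : sgMap i x - sgMap i y = (2 : ℝ)⁻¹ • (x - y) := by
  rw [sgMap, sgMap, ← smul_sub, add_sub_add_right_eq_sub]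

lemma sgMap_injective (i : Fin 3) : Function.Injective (sgMap i) := fun _ _ hxy =>
  add_right_cancel (smul_right_injective Pt (inv_ne_zero (two_ne_zero (α := ℝ))) hxy)

lemma isEdge_succ_sgMap_iff (n : ℕ) (i : Fin 3) (x y : Pt) :
    isEdge (n + 1) (sgMap i x) (sgMap i y) ↔ isEdge n x y := by
  have hpow : (2 : ℝ) ^ (-((n + 1 : ℕ) : ℤ)) = 2⁻¹ * 2 ^ (-(n : ℤ)) := by
    rw [zpow_neg, zpow_neg, zpow_natCast, zpow_natCast, pow_succ', mul_inv]
  rw [isEdge, isEdge, sgMap_sub_sgMap, norm_smul, hpow, Real.norm_of_nonneg (by norm_num)]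
  exact mul_right_inj' (by norm_num)

lemma mem_Vn_zero {x : Pt} : x ∈ Vn 0 ↔ ∃ i, ptA i = x := by
  simp [Vn, Fin.exists_fin_succ, eq_comm]

lemma mem_Vn_succ {n : ℕ} {x : Pt} : x ∈ Vn (n + 1) ↔ ∃ i, x ∈ (Vn n).image (sgMap i) := by
  simp [Vn, Fin.exists_fin_succ]

lemma sgMap_mem_Vn_succ {n : ℕ} {x : Pt} (hx : x ∈ Vn n) (i : Fin 3) : sgMap i x ∈ Vn (n + 1) :=
  mem_Vn_succ.2 ⟨i, Finset.mem_image_of_mem _ hx⟩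

lemma ptA_mem_Vn (n : ℕ) (i : Fin 3) : ptA i ∈ Vn n := by
  induction n with
  | zero => exact mem_Vn_zero.2 ⟨i, rfl⟩
  | succ n ih => simpa only [sgMap_ptA_self] using sgMap_mem_Vn_succ ih i

/-- The point with barycentric coordinates `m / 2 ^ n` with respect to the initial triangle, if the
entries of `m` add up to `2 ^ n`. -/
def latticePoint (n : ℕ) (m : Fin 3 → ℤ) : Pt := ((2 : ℝ) ^ n)⁻¹ • ∑ i, (m i : ℝ) • ptA i

/-- The integral barycentric coordinates, in units of `2 ^ (-n)`, of the points of the initial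
triangle. -/
def latticeSimplex (n : ℕ) : Set (Fin 3 → ℤ) := {m | (∀ i, 0 ≤ m i) ∧ ∑ i, m i = 2 ^ n}

lemma norm_sq_sum_smul_ptA {c : Fin 3 → ℝ} (hc : ∑ i, c i = 0) :
    ‖∑ i, c i • ptA i‖ ^ 2 = (∑ i, c i ^ 2) / 2 := by
  rw [Fin.sum_univ_three] at hc
  have hc0 : c 0 = -c 1 - c 2 := by linarith
  simp only [EuclideanSpace.norm_sq_eq, Fin.sum_univ_three, Fin.sum_univ_two, ptA, hc0,
    WithLp.equiv_symm_apply, PiLp.add_apply, PiLp.smul_apply, smul_eq_mul, Real.norm_eq_abs,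
    sq_abs, Matrix.cons_val_zero, Matrix.cons_val_one, Matrix.cons_val_fin_one]
  linear_combination c 2 ^ 2 / 4 * Real.sq_sqrt (show (0 : ℝ) ≤ 3 by norm_num)

lemma norm_sq_latticePoint_sub (n : ℕ) {m m' : Fin 3 → ℤ} (h : ∑ i, m i = ∑ i, m' i) :
    ‖latticePoint n m - latticePoint n m'‖ ^ 2 =
      (2 ^ (-(n : ℤ))) ^ 2 * ((∑ i, (m i - m' i) ^ 2 : ℤ) / 2) := by
  have hsum : ∑ i, ((m i - m' i : ℤ) : ℝ) = 0 := by
    rw [← Int.cast_sum, Finset.sum_sub_distrib, h, sub_self, Int.cast_zero]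
  rw [latticePoint, latticePoint, ← smul_sub, ← Finset.sum_sub_distrib]
  simp only [← sub_smul, ← Int.cast_sub]
  rw [norm_smul, mul_pow, norm_sq_sum_smul_ptA hsum, zpow_neg, zpow_natCast, norm_inv, norm_pow,
    Real.norm_of_nonneg zero_le_two]
  push_cast
  rfl

lemma isEdge_latticePoint_iff (n : ℕ) {m m' : Fin 3 → ℤ} (h : ∑ i, m i = ∑ i, m' i) :
    isEdge n (latticePoint n m) (latticePoint n m') ↔ ∑ i, (m i - m' i) ^ 2 = 2 := by
  have hpos : (0 : ℝ) < 2 ^ (-(n : ℤ)) := by positivity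
  rw [isEdge, ← sq_eq_sq₀ (norm_nonneg _) hpos.le, norm_sq_latticePoint_sub n h,
    mul_eq_left₀ (by positivity), div_eq_one_iff_eq two_ne_zero]
  norm_cast

lemma latticePoint_inj {n : ℕ} {m m' : Fin 3 → ℤ} (hm : m ∈ latticeSimplex n)
    (hm' : m' ∈ latticeSimplex n) (h : latticePoint n m = latticePoint n m') : m = m' := by
  have hnorm := norm_sq_latticePoint_sub n (hm.2.trans hm'.2.symm)
  rw [h, sub_self, norm_zero, zero_pow two_ne_zero, eq_comm, mul_eq_zero_iff_left (by positivity),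
    div_eq_zero_iff, or_iff_left two_ne_zero, Int.cast_eq_zero,
    Finset.sum_eq_zero_iff_of_nonneg fun i _ => sq_nonneg _] at hnorm
  exact funext fun i => sub_eq_zero.1 (eq_zero_of_pow_eq_zero (hnorm i (Finset.mem_univ i)))

lemma latticePoint_single (n : ℕ) (i : Fin 3) : latticePoint n (Pi.single i (2 ^ n)) = ptA i := by
  simp [latticePoint, Pi.single_apply]

lemma sgMap_latticePoint (n : ℕ) (i : Fin 3) (m : Fin 3 → ℤ) :
    sgMap i (latticePoint n m) = latticePoint (n + 1) (m + Pi.single i (2 ^ n)) := by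
  have hne : (2 : ℝ) ^ n ≠ 0 := by positivity
  simp only [sgMap, latticePoint, Pi.add_apply, Int.cast_add, add_smul, Finset.sum_add_distrib,
    Pi.single_apply, Int.cast_ite, ite_smul, Int.cast_zero, zero_smul, Finset.sum_ite_eq',
    Finset.mem_univ, if_true, smul_add, smul_smul]
  congr 2 <;> push_cast <;> field_simp <;> ring

lemma single_mem_latticeSimplex (n : ℕ) (i : Fin 3) :
    (Pi.single i (2 ^ n) : Fin 3 → ℤ) ∈ latticeSimplex n :=
  ⟨fun j => by rw [Pi.single_apply]; split_ifs <;> positivity, by simp [Pi.single_apply]⟩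

lemma add_single_mem_latticeSimplex {n : ℕ} {m : Fin 3 → ℤ} (hm : m ∈ latticeSimplex n)
    (i : Fin 3) : m + Pi.single i (2 ^ n) ∈ latticeSimplex (n + 1) := by
  refine ⟨fun j => add_nonneg (hm.1 j) ((single_mem_latticeSimplex n i).1 j), ?_⟩
  simp only [Pi.add_apply, Finset.sum_add_distrib, hm.2, (single_mem_latticeSimplex n i).2]
  ring

lemma exists_latticePoint_eq {n : ℕ} {x : Pt} (hx : x ∈ Vn n) :
    ∃ m ∈ latticeSimplex n, latticePoint n m = x := by
  induction n generalizing x with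
  | zero =>
    obtain ⟨i, rfl⟩ := mem_Vn_zero.1 hx
    exact ⟨_, single_mem_latticeSimplex 0 i, latticePoint_single 0 i⟩
  | succ n ih =>
    obtain ⟨i, hi⟩ := mem_Vn_succ.1 hx
    obtain ⟨y, hy, rfl⟩ := Finset.mem_image.1 hi
    obtain ⟨m, hm, rfl⟩ := ih hy
    exact ⟨_, add_single_mem_latticeSimplex hm i, (sgMap_latticePoint n i m).symm⟩

lemma eq_single_of_two_pow_le {n : ℕ} {m : Fin 3 → ℤ} (hm : m ∈ latticeSimplex n) {i : Fin 3}
    (hi : 2 ^ n ≤ m i) : m = Pi.single i (2 ^ n) := by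
  have hle (j : Fin 3) : (Pi.single i (2 ^ n) : Fin 3 → ℤ) j ≤ m j := by
    rcases eq_or_ne j i with rfl | hji
    · rwa [Pi.single_eq_same]
    · rw [Pi.single_eq_of_ne hji]
      exact hm.1 j
  have hsum := hm.2.trans (single_mem_latticeSimplex n i).2.symm
  exact funext fun j =>
    ((Finset.sum_eq_sum_iff_of_le fun j _ => hle j).1 hsum.symm j (Finset.mem_univ j)).symm

lemma exists_eq_add_single_of_mem_image {n : ℕ} {i : Fin 3} {m : Fin 3 → ℤ}
    (hm : m ∈ latticeSimplex (n + 1))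
    (h : latticePoint (n + 1) m ∈ (Vn n).image (sgMap i)) :
    ∃ m' ∈ latticeSimplex n, m = m' + Pi.single i (2 ^ n) := by
  obtain ⟨y, hy, hyx⟩ := Finset.mem_image.1 h
  obtain ⟨m', hm', rfl⟩ := exists_latticePoint_eq hy
  rw [sgMap_latticePoint] at hyx
  exact ⟨m', hm', (latticePoint_inj (add_single_mem_latticeSimplex hm' i) hm hyx).symm⟩

lemma two_pow_le_of_mem_image {n : ℕ} {i : Fin 3} {m : Fin 3 → ℤ}
    (hm : m ∈ latticeSimplex (n + 1))
    (h : latticePoint (n + 1) m ∈ (Vn n).image (sgMap i)) : 2 ^ n ≤ m i := by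
  obtain ⟨m', hm', rfl⟩ := exists_eq_add_single_of_mem_image hm h
  simpa using hm'.1 i

lemma mem_image_sgMap_iff {n : ℕ} {i : Fin 3} {m : Fin 3 → ℤ} (hm : m ∈ latticeSimplex (n + 1))
    (hx : latticePoint (n + 1) m ∈ Vn (n + 1)) :
    latticePoint (n + 1) m ∈ (Vn n).image (sgMap i) ↔ 2 ^ n ≤ m i := by
  refine ⟨two_pow_le_of_mem_image hm, fun hi => ?_⟩
  obtain ⟨j, hj⟩ := mem_Vn_succ.1 hx
  rcases eq_or_ne j i with rfl | hji
  · exact hj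
  obtain ⟨m', hm', rfl⟩ := exists_eq_add_single_of_mem_image hm hj
  have hm'_eq : m' = Pi.single i (2 ^ n) :=
    eq_single_of_two_pow_le hm' (by simpa [Pi.single_apply, hji.symm] using hi)
  rw [← sgMap_latticePoint, hm'_eq, latticePoint_single, sgMap_ptA_comm]
  exact Finset.mem_image_of_mem _ (ptA_mem_Vn n j)

lemma eq_sgMap_ptA_of_mem_image {n : ℕ} {i j : Fin 3} (hij : i ≠ j) {x : Pt}
    (hi : x ∈ (Vn n).image (sgMap i)) (hj : x ∈ (Vn n).image (sgMap j)) :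
    x = sgMap i (ptA j) := by
  obtain ⟨y, hy, rfl⟩ := Finset.mem_image.1 hi
  obtain ⟨m, hm, rfl⟩ := exists_latticePoint_eq hy
  rw [sgMap_latticePoint] at hj
  have hmj := two_pow_le_of_mem_image (add_single_mem_latticeSimplex hm i) hj
  rw [Pi.add_apply, Pi.single_eq_of_ne hij.symm, add_zero] at hmj
  rw [eq_single_of_two_pow_le hm hmj, latticePoint_single]

/-! ### Edges -/

/-- The edges of the graph of level `n`, each listed in both orientations. -/
def edgePairs (n : ℕ) : Finset (Pt × Pt) := {e ∈ Vn n ×ˢ Vn n | isEdge n e.1 e.2}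

lemma mem_edgePairs {n : ℕ} {e : Pt × Pt} :
    e ∈ edgePairs n ↔ (e.1 ∈ Vn n ∧ e.2 ∈ Vn n) ∧ isEdge n e.1 e.2 := by
  rw [edgePairs, Finset.mem_filter, Finset.mem_product]

lemma fst_ne_snd_of_mem_edgePairs {n : ℕ} {e : Pt × Pt} (he : e ∈ edgePairs n) :
    e.1 ≠ e.2 := by
  intro h
  have hedge := (mem_edgePairs.1 he).2
  rw [isEdge, h, sub_self, norm_zero] at hedge
  exact (zpow_pos two_pos _).ne hedge

/-- The edges of level `n + 1` inside the cell `i` of level one. -/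
def cellEdgePairs (n : ℕ) (i : Fin 3) : Finset (Pt × Pt) :=
  (edgePairs n).image (Prod.map (sgMap i) (sgMap i))

lemma mem_cellEdgePairs {n : ℕ} {i : Fin 3} {e : Pt × Pt} :
    e ∈ cellEdgePairs n i ↔ (e.1 ∈ (Vn n).image (sgMap i) ∧ e.2 ∈ (Vn n).image (sgMap i)) ∧
      isEdge (n + 1) e.1 e.2 := by
  obtain ⟨x, y⟩ := e
  simp only [cellEdgePairs, Finset.mem_image, mem_edgePairs, Prod.exists, Prod.map_apply,
    Prod.mk.injEq]
  constructor
  · rintro ⟨x, y, ⟨⟨hx, hy⟩, hxy⟩, rfl, rfl⟩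
    exact ⟨⟨⟨x, hx, rfl⟩, y, hy, rfl⟩, (isEdge_succ_sgMap_iff n i x y).2 hxy⟩
  · rintro ⟨⟨⟨x, hx, rfl⟩, y, hy, rfl⟩, hxy⟩
    exact ⟨x, y, ⟨⟨hx, hy⟩, (isEdge_succ_sgMap_iff n i x y).1 hxy⟩, rfl, rfl⟩

lemma cellEdgePairs_subset (n : ℕ) (i : Fin 3) : cellEdgePairs n i ⊆ edgePairs (n + 1) := by
  intro e he
  obtain ⟨⟨hx, hy⟩, hxy⟩ := mem_cellEdgePairs.1 he
  exact mem_edgePairs.2 ⟨⟨mem_Vn_succ.2 ⟨i, hx⟩, mem_Vn_succ.2 ⟨i, hy⟩⟩, hxy⟩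

lemma pairwise_disjoint_cellEdgePairs (n : ℕ) :
    Pairwise fun i j => Disjoint (cellEdgePairs n i) (cellEdgePairs n j) := by
  refine fun i j hij => Finset.disjoint_left.2 fun e hi hj => ?_
  obtain ⟨⟨hxi, hyi⟩, -⟩ := mem_cellEdgePairs.1 hi
  obtain ⟨⟨hxj, hyj⟩, -⟩ := mem_cellEdgePairs.1 hj
  exact fst_ne_snd_of_mem_edgePairs (cellEdgePairs_subset n i hi)
    ((eq_sgMap_ptA_of_mem_image hij hxi hxj).trans (eq_sgMap_ptA_of_mem_image hij hyi hyj).symm)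

/-- The edges of level `n + 1` which join two different cells of level one. -/
def contactEdgePairs (n : ℕ) : Finset (Pt × Pt) :=
  edgePairs (n + 1) \ Finset.univ.biUnion (cellEdgePairs n)

/-- The integral barycentric coordinates, in units of `2 ^ (-(n + 1))`, of the endpoint in the cell
`i` of the contact edge between the cells `i` and `j`. The common point of the two cells has the
coordinates `2 ^ n` at `i` and `j`; this is its neighbour in the direction from `j` to the third
corner. -/
def contactCoord (n : ℕ) (i j k : Fin 3) : ℤ :=
  if k = i then 2 ^ n else if k = j then 2 ^ n - 1 else 1

lemma contactCoord_mem_latticeSimplex (n : ℕ) {i j : Fin 3} (hij : i ≠ j) :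
    contactCoord n i j ∈ latticeSimplex (n + 1) := by
  have hpow : (1 : ℤ) ≤ 2 ^ n := one_le_pow₀ one_le_two
  refine ⟨fun k => ?_, ?_⟩
  · unfold contactCoord
    split_ifs <;> omega
  · obtain ⟨k, hki, hkj⟩ := Fin.exists_ne_and_ne_of_two_lt i j (by norm_num)
    rw [sum_univ_fin_three hij hki.symm hkj.symm]
    simp only [contactCoord, hij.symm, hki, hkj, if_true, if_false]
    ring

lemma two_pow_le_contactCoord_iff {n : ℕ} (hn : n ≠ 0) {i j k : Fin 3} :
    2 ^ n ≤ contactCoord n i j k ↔ k = i := by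
  have hpow : (1 : ℤ) < 2 ^ n := one_lt_pow₀ one_lt_two hn
  unfold contactCoord
  split_ifs <;> simp_all

/-- The endpoint in the cell `i` of the contact edge between the cells `i` and `j`, at level
`n + 1`. -/
def contactPoint (n : ℕ) (i j : Fin 3) : Pt := latticePoint (n + 1) (contactCoord n i j)

lemma isEdge_contactPoint (n : ℕ) {i j : Fin 3} (hij : i ≠ j) :
    isEdge (n + 1) (contactPoint n i j) (contactPoint n j i) := by
  obtain ⟨k, hki, hkj⟩ := Fin.exists_ne_and_ne_of_two_lt i j (by norm_num)
  rw [contactPoint, contactPoint, isEdge_latticePoint_iff, sum_univ_fin_three hij hki.symm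
    hkj.symm]
  · simp [contactCoord, hij, hij.symm, hki, hkj]
  · rw [(contactCoord_mem_latticeSimplex n hij).2, (contactCoord_mem_latticeSimplex n hij.symm).2]

/-- The coordinates of the ends of an edge differ by at most one, while the coordinates `i` and `j`
cross the threshold `2 ^ n` in opposite directions. -/
lemma eq_contactCoord {n : ℕ} {i j : Fin 3} (hij : i ≠ j) {m m' : Fin 3 → ℤ}
    (hm : m ∈ latticeSimplex (n + 1)) (hedge : ∑ l, (m l - m' l) ^ 2 = 2) (hi : 2 ^ n ≤ m i)
    (hi' : m' i < 2 ^ n) (hj : m j < 2 ^ n) (hj' : 2 ^ n ≤ m' j) : m = contactCoord n i j := by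
  have hdiff (l : Fin 3) : |m l - m' l| < 2 := by
    refine abs_lt_of_sq_lt_sq ?_ zero_le_two
    have hle : (m l - m' l) ^ 2 ≤ ∑ l, (m l - m' l) ^ 2 :=
      Finset.single_le_sum (fun l _ => sq_nonneg (m l - m' l)) (Finset.mem_univ l)
    linarith
  have hdiffi := abs_lt.1 (hdiff i)
  have hdiffj := abs_lt.1 (hdiff j)
  have hmi : m i = 2 ^ n := by linarith
  have hmj : m j = 2 ^ n - 1 := by linarith
  funext k
  rcases eq_or_ne k i with rfl | hki
  · rw [hmi, contactCoord, if_pos rfl]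
  rcases eq_or_ne k j with rfl | hkj
  · rw [hmj, contactCoord, if_neg hki, if_pos rfl]
  have hsum := hm.2
  rw [sum_univ_fin_three hij hki.symm hkj.symm, hmi, hmj, pow_succ] at hsum
  rw [contactCoord, if_neg hki, if_neg hkj]
  linarith

lemma exists_contactPoint_of_mem_contactEdgePairs {n : ℕ} {e : Pt × Pt}
    (he : e ∈ contactEdgePairs n) :
    ∃ i j, i ≠ j ∧ e = (contactPoint n i j, contactPoint n j i) := by
  obtain ⟨x, y⟩ := e
  obtain ⟨hedge, hcell⟩ := Finset.mem_sdiff.1 he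
  obtain ⟨⟨hx, hy⟩, hxy⟩ := mem_edgePairs.1 hedge
  have hcommon (i : Fin 3) (hi : x ∈ (Vn n).image (sgMap i)) : y ∉ (Vn n).image (sgMap i) :=
    fun hi' => hcell (Finset.mem_biUnion.2
      ⟨i, Finset.mem_univ i, mem_cellEdgePairs.2 ⟨⟨hi, hi'⟩, hxy⟩⟩)
  obtain ⟨m, hm, rfl⟩ := exists_latticePoint_eq hx
  obtain ⟨m', hm', rfl⟩ := exists_latticePoint_eq hy
  rw [isEdge_latticePoint_iff _ (hm.2.trans hm'.2.symm)] at hxy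
  simp only [mem_image_sgMap_iff hm hx, mem_image_sgMap_iff hm' hy, not_le] at hcommon
  obtain ⟨i, hi⟩ := mem_Vn_succ.1 hx
  obtain ⟨j, hj⟩ := mem_Vn_succ.1 hy
  rw [mem_image_sgMap_iff hm hx] at hi
  rw [mem_image_sgMap_iff hm' hy] at hj
  have hi' := hcommon i hi
  have hj' : m j < 2 ^ n := lt_of_not_ge fun h => (hcommon j h).not_ge hj
  have hij : i ≠ j := fun h => hi'.not_ge (h ▸ hj)
  refine ⟨i, j, hij, ?_⟩
  rw [contactPoint, contactPoint, ← eq_contactCoord hij hm hxy hi hi' hj' hj,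
    ← eq_contactCoord hij.symm hm' ?_ hj hj' hi' hi]
  simpa only [← neg_sub (m' _), neg_sq] using hxy

/-! ### Values at the vertices -/

/-- The similarity of the plane which maps the initial triangle to the cell with address `w`. -/
def cellMap (w : List (Fin 3)) (x : Pt) : Pt := w.foldr sgMap x

lemma cellMap_cons (i : Fin 3) (w : List (Fin 3)) (x : Pt) :
    cellMap (i :: w) x = sgMap i (cellMap w x) := rfl

lemma cellMap_concat (w : List (Fin 3)) (i : Fin 3) (x : Pt) :
    cellMap (w ++ [i]) x = cellMap w (sgMap i x) := by
  simp [cellMap]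

lemma cellMap_ptA_mem_Vn (w : List (Fin 3)) (j : Fin 3) : cellMap w (ptA j) ∈ Vn w.length := by
  induction w with
  | nil => exact ptA_mem_Vn 0 j
  | cons i w ih => exact sgMap_mem_Vn_succ ih i

lemma cellMap_replicate_ptA (n : ℕ) (j k : Fin 3) :
    cellMap (List.replicate n j) (ptA k) =
      latticePoint n (Pi.single j (2 ^ n - 1) + Pi.single k 1) := by
  induction n with
  | zero => simpa [cellMap] using (latticePoint_single 0 k).symm
  | succ n ih =>
    rw [List.replicate_succ, cellMap_cons, ih, sgMap_latticePoint, add_right_comm, ← Pi.single_add]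
    congr 3
    ring

lemma cellMap_cons_replicate_ptA (n : ℕ) {i j k : Fin 3} (hij : i ≠ j) (hik : i ≠ k)
    (hjk : j ≠ k) : cellMap (i :: List.replicate n j) (ptA k) = contactPoint n i j := by
  rw [cellMap_cons, cellMap_replicate_ptA, sgMap_latticePoint, contactPoint]
  congr 1
  funext l
  simp only [contactCoord, Pi.add_apply, Pi.single_apply]
  obtain rfl | rfl | rfl := fin_three_eq_or_eq_or_eq hij hik hjk l
  · simp [hij, hik]
  · simp [hij.symm, hjk]
  · simp [hik.symm, hjk.symm]

lemma contactPoint_mem_Vn (n : ℕ) {i j : Fin 3} (hij : i ≠ j) :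
    contactPoint n i j ∈ Vn (n + 1) := by
  obtain ⟨k, hki, hkj⟩ := Fin.exists_ne_and_ne_of_two_lt i j (by norm_num)
  rw [← cellMap_cons_replicate_ptA n hij hki.symm hkj.symm]
  simpa using cellMap_ptA_mem_Vn (i :: List.replicate n j) k

lemma contactEdgePairs_zero : contactEdgePairs 0 = ∅ := by
  refine Finset.eq_empty_of_forall_notMem fun e he => ?_
  obtain ⟨i, j, hij, rfl⟩ := exists_contactPoint_of_mem_contactEdgePairs he
  obtain ⟨k, hki, hkj⟩ := Fin.exists_ne_and_ne_of_two_lt i j (by norm_num)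
  have hmem {i j : Fin 3} (hij : i ≠ j) (hki : k ≠ i) (hkj : k ≠ j) :
      contactPoint 0 i j ∈ (Vn 0).image (sgMap k) := by
    rw [contactPoint, mem_image_sgMap_iff (contactCoord_mem_latticeSimplex 0 hij)
      (contactPoint_mem_Vn 0 hij)]
    simp [contactCoord, hki, hkj]
  exact (Finset.mem_sdiff.1 he).2 (Finset.mem_biUnion.2 ⟨k, Finset.mem_univ k,
    mem_cellEdgePairs.2 ⟨⟨hmem hij hki hkj, hmem hij.symm hkj hki⟩, isEdge_contactPoint 0 hij⟩⟩)

lemma contactEdgePairs_eq {n : ℕ} (hn : n ≠ 0) :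
    contactEdgePairs n = ({p : Fin 3 × Fin 3 | p.1 ≠ p.2} : Finset _).image
      fun p => (contactPoint n p.1 p.2, contactPoint n p.2 p.1) := by
  ext e
  simp only [Finset.mem_image, Finset.mem_filter, Finset.mem_univ, true_and, Prod.exists]
  constructor
  · intro he
    obtain ⟨i, j, hij, rfl⟩ := exists_contactPoint_of_mem_contactEdgePairs he
    exact ⟨i, j, hij, rfl⟩
  · rintro ⟨i, j, hij, rfl⟩
    have hi := contactPoint_mem_Vn n hij
    have hj := contactPoint_mem_Vn n hij.symm
    refine Finset.mem_sdiff.2 ⟨mem_edgePairs.2 ⟨⟨hi, hj⟩, isEdge_contactPoint n hij⟩, ?_⟩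
    simp only [Finset.mem_biUnion, mem_cellEdgePairs, not_exists, not_and]
    rintro k - ⟨hk, hk'⟩ -
    rw [contactPoint, mem_image_sgMap_iff (contactCoord_mem_latticeSimplex n hij) hi,
      two_pow_le_contactCoord_iff hn] at hk
    rw [contactPoint, mem_image_sgMap_iff (contactCoord_mem_latticeSimplex n hij.symm) hj,
      two_pow_le_contactCoord_iff hn] at hk'
    exact hij (hk.symm.trans hk')

lemma contactPoint_left_injective {n : ℕ} (hn : n ≠ 0) {i j i' j' : Fin 3} (hij : i ≠ j)
    (hij' : i' ≠ j') (h : contactPoint n i j = contactPoint n i' j') : i = i' := by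
  rw [← two_pow_le_contactCoord_iff hn (j := j'), ← latticePoint_inj
    (contactCoord_mem_latticeSimplex n hij) (contactCoord_mem_latticeSimplex n hij') h,
    two_pow_le_contactCoord_iff hn]

lemma sum_contactEdgePairs {n : ℕ} (hn : n ≠ 0) (φ : Pt × Pt → ℝ) :
    ∑ e ∈ contactEdgePairs n, φ e = ∑ k : Fin 3,
      (φ (contactPoint n (k + 1) (k + 2), contactPoint n (k + 2) (k + 1)) +
        φ (contactPoint n (k + 2) (k + 1), contactPoint n (k + 1) (k + 2))) := by
  rw [contactEdgePairs_eq hn, Finset.sum_image, Finset.sum_filter, Fintype.sum_prod_type,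
    sum_sum_fin_three]
  · simp [(fin_three_add_one_ne_add_two _).symm]
  · rintro ⟨i, j⟩ hij ⟨i', j'⟩ hij' h
    rw [Finset.mem_coe, Finset.mem_filter] at hij hij'
    rw [Prod.mk.injEq] at h ⊢
    exact ⟨contactPoint_left_injective hn hij.2 hij'.2 h.1,
      contactPoint_left_injective hn hij.2.symm hij'.2.symm h.2⟩

/-- The values of a function on the plane at the corners of all cells. -/
def vertexValues : (Pt → ℝ) →ₗ[ℝ] CellFun where
  toFun u w j := u (cellMap w (ptA j))
  map_add' _ _ := rfl
  map_smul' _ _ := rfl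

lemma vertexValues_apply (u : Pt → ℝ) (w : List (Fin 3)) (j : Fin 3) :
    vertexValues u w j = u (cellMap w (ptA j)) := rfl

lemma subcell_vertexValues (i : Fin 3) (u : Pt → ℝ) :
    subcell i (vertexValues u) = vertexValues (u ∘ sgMap i) := rfl

lemma vertexValues_mem_junctionCompatible (u : Pt → ℝ) : vertexValues u ∈ junctionCompatible := by
  constructor
  · intro w i
    rw [vertexValues_apply, vertexValues_apply, cellMap_concat, sgMap_ptA_self]
  · intro w i j
    rw [vertexValues_apply, vertexValues_apply, cellMap_concat, cellMap_concat, sgMap_ptA_comm]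

/-! ### The energy of a function on the plane -/

lemma energyBi_eq_sum_edgePairs (n : ℕ) (u v : Pt → ℝ) :
    energyBi n u v =
      (5 / 3) ^ n / 2 * ∑ e ∈ edgePairs n, (u e.2 - u e.1) * (v e.2 - v e.1) := by
  rw [energyBi, edgePairs, Finset.sum_filter, Finset.sum_product, mul_one_div]

lemma energy_eq_sum_edgePairs (n : ℕ) (u : Pt → ℝ) :
    energy n u = (5 / 3) ^ n / 2 * ∑ e ∈ edgePairs n, (u e.2 - u e.1) ^ 2 := by
  simp only [energy, energyBi_eq_sum_edgePairs, sq]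

lemma energyBi_eq_energy_add (n : ℕ) (u v : Pt → ℝ) :
    energyBi n u v = (energy n (u + v) - energy n u - energy n v) / 2 := by
  simp only [energy_eq_sum_edgePairs, energyBi_eq_sum_edgePairs, ← mul_sub,
    ← Finset.sum_sub_distrib, Pi.add_apply, mul_div_assoc, Finset.sum_div]
  congr 1
  exact Finset.sum_congr rfl fun e _ => by ring

lemma sum_cellEdgePairs (n : ℕ) (i : Fin 3) (u : Pt → ℝ) :
    (5 / 3) ^ n / 2 * ∑ e ∈ cellEdgePairs n i, (u e.2 - u e.1) ^ 2 = energy n (u ∘ sgMap i) := by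
  rw [cellEdgePairs, Finset.sum_image ((sgMap_injective i).prodMap (sgMap_injective i)).injOn,
    energy_eq_sum_edgePairs]
  rfl

lemma contactForm_vertexValues (n : ℕ) (u : Pt → ℝ) :
    contactForm n (vertexValues u) =
      (5 / 3) ^ (n + 1) / 2 * ∑ e ∈ contactEdgePairs n, (u e.2 - u e.1) ^ 2 := by
  rcases eq_or_ne n 0 with rfl | hn
  · simp [contactForm_zero, contactEdgePairs_zero]
  rw [contactForm_apply hn, sum_contactEdgePairs hn, div_mul_eq_mul_div, mul_div_assoc,
    Finset.sum_div]
  congr 1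
  refine Finset.sum_congr rfl fun k _ => ?_
  have hk1 := fin_three_add_one_ne k
  have hk2 := fin_three_add_two_ne k
  have h12 := fin_three_add_one_ne_add_two k
  rw [vertexValues_apply, vertexValues_apply, cellMap_cons_replicate_ptA n h12 hk1 hk2,
    cellMap_cons_replicate_ptA n h12.symm hk2 hk1]
  ring

lemma ptA_injective : Function.Injective ptA := by
  intro i j hij
  rw [← latticePoint_single 0, ← latticePoint_single 0] at hij
  have hsingle := latticePoint_inj (single_mem_latticeSimplex 0 i) (single_mem_latticeSimplex 0 j)
    hij
  by_contra hne
  simpa [Pi.single_eq_of_ne hne] using congrFun hsingle i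

lemma isEdge_zero_ptA_iff (i j : Fin 3) : isEdge 0 (ptA i) (ptA j) ↔ i ≠ j := by
  rw [← latticePoint_single 0, ← latticePoint_single 0, isEdge_latticePoint_iff]
  · revert i j
    decide
  · simp [Pi.single_apply]

lemma Vn_zero : Vn 0 = Finset.univ.image ptA :=
  Finset.ext fun x => mem_Vn_zero.trans (by simp)

lemma energy_zero (u : Pt → ℝ) : energy 0 u = triangleForm (vertexValues u []) := by
  rw [energy, energyBi, Vn_zero, Finset.sum_image ptA_injective.injOn]
  simp only [Finset.sum_image ptA_injective.injOn, isEdge_zero_ptA_iff]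
  rw [sum_sum_fin_three, triangleForm_apply]
  simp only [ne_eq, not_true_eq_false, if_false, Finset.sum_const_zero, zero_add,
    fin_three_add_one_ne_add_two, (fin_three_add_one_ne_add_two _).symm, not_false_eq_true, if_true]
  rw [pow_zero, one_mul, Finset.mul_sum]
  refine Finset.sum_congr rfl fun k _ => ?_
  simp only [vertexValues_apply, cellMap, List.foldr_nil]
  ring

lemma energy_succ (n : ℕ) (u : Pt → ℝ) :
    energy (n + 1) u = 5 / 3 * ∑ i, energy n (u ∘ sgMap i) + contactForm n (vertexValues u) := by
  have hsubset : Finset.univ.biUnion (cellEdgePairs n) ⊆ edgePairs (n + 1) :=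
    Finset.biUnion_subset.2 fun i _ => cellEdgePairs_subset n i
  rw [contactForm_vertexValues, energy_eq_sum_edgePairs, ← Finset.sum_sdiff hsubset,
    Finset.sum_biUnion ((pairwise_disjoint_cellEdgePairs n).set_pairwise _)]
  simp only [← sum_cellEdgePairs, ← Finset.mul_sum]
  rw [contactEdgePairs]
  ring

lemma energy_eq_graphEnergy (n : ℕ) (u : Pt → ℝ) :
    energy n u = graphEnergy n (vertexValues u) := by
  induction n generalizing u with
  | zero => exact energy_zero u
  | succ n ih => simp only [energy_succ, graphEnergy_succ_apply, subcell_vertexValues, ih]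

lemma finiteEnergy_iff {u : Pt → ℝ} :
    FiniteEnergy u ↔ BddAbove (range fun n => graphEnergy n (vertexValues u)) := by
  simp only [FiniteEnergy, energy_eq_graphEnergy]

lemma finiteEnergy_add {u v : Pt → ℝ} (hu : FiniteEnergy u) (hv : FiniteEnergy v) :
    FiniteEnergy (u + v) := by
  rw [finiteEnergy_iff] at hu hv ⊢
  simpa only [map_add] using bddAbove_range_map_add graphEnergy_nonneg hu hv

lemma exists_tendsto_energy {u : Pt → ℝ} (hu : FiniteEnergy u) :
    ∃ L, Tendsto (fun n => energy n u) atTop (𝓝 L) := by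
  simp only [energy_eq_graphEnergy]
  exact exists_tendsto_graphEnergy (vertexValues_mem_junctionCompatible u) (finiteEnergy_iff.1 hu)

end SierpinskiGasket

/-- For all `f, g : V* → ℝ` of finite energy, the limit
`𝓔(f,g) = limₙ 𝓔ₙ(f,g)` exists as a finite real number. -/
theorem statement13 (u v : Pt → ℝ) (hu : FiniteEnergy u) (hv : FiniteEnergy v) :
    ∃ L : ℝ, Tendsto (fun n : ℕ => energyBi n u v) atTop (𝓝 L) := by
  obtain ⟨Lu, hLu⟩ := SierpinskiGasket.exists_tendsto_energy hu
  obtain ⟨Lv, hLv⟩ := SierpinskiGasket.exists_tendsto_energy hv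
  obtain ⟨Ls, hLs⟩ :=
    SierpinskiGasket.exists_tendsto_energy (SierpinskiGasket.finiteEnergy_add hu hv)
  refine ⟨(Ls - Lu - Lv) / 2, ?_⟩
  simp only [SierpinskiGasket.energyBi_eq_energy_add]
  exact ((hLs.sub hLu).sub hLv).div_const 2

end
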